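/- There is a sign ε ∈ {+1, -1} such that Z_0 · Z_1 · ⋯ · Z_{n-1} = ε·T + E, where T := x_1x_2⋯x_n ⊗ ⋀_{i=1}^n (⋀_{j=1}^{i-1} x_jx_i) ∈ K_N with N = n(n-1)/2, and E is a k-linear combination of elements of the form f ⊗ m_1 ∧ ⋯ ∧ m_N in which f and the quadratic monomials m_1, …, m_N are monomials and at least one m_l equals x_i² for some i; in particular, T is the unique square-free term of the product and it occurs with coefficient ±1. -/

import Mathlib

set_option maxHeartbeats 1000000
set_option synthInstance.maxHeartbeats 400000

open scoped TensorProduct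
open MvPolynomial

noncomputable section

variable (k : Type) [Field k] (n : ℕ)

/-- The polynomial ring `S = k[x_1,…,x_n]`. -/
abbrev S := MvPolynomial (Fin n) k

/-- The space `S_1` of linear forms. -/
abbrev S1 := homogeneousSubmodule (Fin n) k 1

/-- The space `S_2` of quadratic forms. -/
abbrev S2 := homogeneousSubmodule (Fin n) k 2

/-- The ambient algebra `S ⊗ Λ(S_2)` containing all terms `K_t = S ⊗ ⋀^t S_2`
of the Koszul complex `K(𝔪², S)`; the product is `(f ⊗ ω)(g ⊗ η) = fg ⊗ ω∧η`. -/
abbrev KK := (MvPolynomial (Fin n) k) ⊗[k] ExteriorAlgebra k (S2 k n)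

variable {k n}

/-- The product of two linear forms, as an element of `S_2`. -/
def mulW (a b : S1 k n) : S2 k n :=
  ⟨(a : S k n) * (b : S k n), by
    rw [mem_homogeneousSubmodule]
    have ha := (mem_homogeneousSubmodule 1 (a : S k n)).1 a.2
    have hb := (mem_homogeneousSubmodule 1 (b : S k n)).1 b.2
    simpa using ha.mul hb⟩

/-- The variable `x_i`, as an element of `S_1`. -/
def xv (i : Fin n) : S1 k n :=
  ⟨X i, by rw [mem_homogeneousSubmodule]; exact isHomogeneous_X _ _⟩

/-- The quadratic monomial `x_i x_j`, as an element of `S_2`. -/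
def q (i j : Fin n) : S2 k n := mulW (xv i) (xv j)

variable (k n)

/-- `K_t = S ⊗ ⋀^t S_2`, as a subspace of the ambient algebra `KK`. -/
def Kt (t : ℕ) : Submodule k (KK k n) :=
  LinearMap.range (TensorProduct.map (LinearMap.id : S k n →ₗ[k] S k n)
    (Submodule.subtype (⋀[k]^t (S2 k n))))

variable {k n}

/-- The family of Koszul differentials, encoded as linear endomorphisms of the
ambient space `KK`: `D t` restricted to `K_t` is the `t`-th Koszul differential
`d_t : K_t → K_{t-1}`, i.e. `d_0 = 0` and
`d_t(f ⊗ m_1 ∧ ⋯ ∧ m_t) = Σ_j (-1)^{j-1} (f·m_j) ⊗ m_1 ∧ ⋯ ∧ m̂_j ∧ ⋯ ∧ m_t`. -/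
def IsKoszulDiff (D : ℕ → KK k n →ₗ[k] KK k n) : Prop :=
  D 0 = 0 ∧
  ∀ (t : ℕ) (f : S k n) (m : Fin (t+1) → S2 k n),
    D (t+1) (f ⊗ₜ[k] (ExteriorAlgebra.ιMulti k (t+1) m : ExteriorAlgebra k (S2 k n)))
      = ∑ j : Fin (t+1), ((-1:ℤ)^(j:ℕ)) •
          ((f * ((m j : S k n))) ⊗ₜ[k]
            (ExteriorAlgebra.ιMulti k t (fun l => m (j.succAbove l)) : ExteriorAlgebra k (S2 k n)))

/-- The cycle `z_{a,b} = Σ_{σ ∈ 𝔖_{t+1}} sgn(σ) a_{σ(t+1)} ⊗ (b_1 a_{σ(1)} ∧ ⋯ ∧ b_t a_{σ(t)})`. -/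
def zel (t : ℕ) (a : Fin (t+1) → S1 k n) (b : Fin t → S1 k n) : KK k n :=
  ∑ σ : Equiv.Perm (Fin (t+1)),
    ((Equiv.Perm.sign σ : ℤ)) •
      (((a (σ (Fin.last t)) : S k n)) ⊗ₜ[k]
        (ExteriorAlgebra.ιMulti k t (fun j => mulW (b j) (a (σ j.castSucc))) :
          ExteriorAlgebra k (S2 k n)))

/-- The cycle `Z_i` (0-indexed: `Zel i` is the paper's `Z_i` for `0 ≤ i ≤ n-1`), namely
`Z_i = Σ_{j=0}^{i} (-1)^{j} x_j ⊗ (x_0 x_i ∧ ⋯ ∧ x̂_j x_i ∧ ⋯ ∧ x_{i-1} x_i ∧ x_i²)`. -/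
def Zel (i : Fin n) : KK k n :=
  ∑ j : Fin ((i:ℕ)+1),
    ((-1:ℤ)^(j:ℕ)) •
      ((X (Fin.castLE i.isLt j) : S k n) ⊗ₜ[k]
        (ExteriorAlgebra.ιMulti k (i:ℕ)
          (fun l : Fin (i:ℕ) => q (Fin.castLE i.isLt (j.succAbove l)) i) :
            ExteriorAlgebra k (S2 k n)))


variable (k n) in
/-- The wedge `⋀_{i=1}^n (⋀_{j=1}^{i-1} x_j x_i)` (factors in increasing order of `i`,
and within each `i` in increasing order of `j`), an element of `⋀^N S_2 ⊆ Λ(S_2)`. -/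
def wedgeT : ExteriorAlgebra k (S2 k n) :=
  ((List.finRange n).map (fun i =>
    ((((List.finRange n).filter (fun j => j < i)).map
      (fun j => ExteriorAlgebra.ι k (q j i : S2 k n))).prod))).prod

/-- Span of all terms with monomial data and exterior degree `t`. -/
def PP (k : Type) [Field k] (n t : ℕ) : Submodule k (KK k n) :=
  Submodule.span k {w | ∃ (u : Fin n →₀ ℕ) (L : List (S2 k n)), L.length = t ∧
    (∀ m ∈ L, ∃ i j : Fin n, m = q i j) ∧
    w = (monomial u (1:k) : S k n) ⊗ₜ[k] (L.map (ExteriorAlgebra.ι k)).prod}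

/-- Span of those terms that contain a square. -/
def BB (k : Type) [Field k] (n t : ℕ) : Submodule k (KK k n) :=
  Submodule.span k {w | ∃ (u : Fin n →₀ ℕ) (L : List (S2 k n)), L.length = t ∧
    (∀ m ∈ L, ∃ i j : Fin n, m = q i j) ∧ (∃ m ∈ L, ∃ i : Fin n, m = q i i) ∧
    w = (monomial u (1:k) : S k n) ⊗ₜ[k] (L.map (ExteriorAlgebra.ι k)).prod}

theorem BB_le (k : Type) [Field k] (n t : ℕ) : BB k n t ≤ PP k n t := by
  apply Submodule.span_mono
  rintro w ⟨u, L, h1, h2, -, h4⟩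
  exact ⟨u, L, h1, h2, h4⟩

theorem PP_mul_BB {k : Type} [Field k] {n s t : ℕ} {a b : KK k n}
    (ha : a ∈ PP k n s) (hb : b ∈ BB k n t) : a * b ∈ BB k n (s + t) := by
  have h := Submodule.mul_mem_mul ha hb
  rw [PP, BB, Submodule.span_mul_span] at h
  refine Submodule.span_mono ?_ h
  rintro _ ⟨_, ⟨u, L, h1, h2, rfl⟩, _, ⟨u', L', h1', h2', ⟨m, hm, hm'⟩, rfl⟩, rfl⟩
  refine ⟨u + u', L ++ L', by simp [h1, h1'], ?_, ⟨m, by simp [hm], hm'⟩, ?_⟩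
  · intro m hm
    rcases List.mem_append.1 hm with h | h
    exacts [h2 m h, h2' m h]
  · simp [Algebra.TensorProduct.tmul_mul_tmul, monomial_mul]

theorem BB_mul_PP {k : Type} [Field k] {n s t : ℕ} {a b : KK k n}
    (ha : a ∈ BB k n s) (hb : b ∈ PP k n t) : a * b ∈ BB k n (s + t) := by
  have h := Submodule.mul_mem_mul ha hb
  rw [PP, BB, Submodule.span_mul_span] at h
  refine Submodule.span_mono ?_ h
  rintro _ ⟨_, ⟨u, L, h1, h2, ⟨m, hm, hm'⟩, rfl⟩, _, ⟨u', L', h1', h2', rfl⟩, rfl⟩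
  refine ⟨u + u', L ++ L', by simp [h1, h1'], ?_, ⟨m, by simp [hm], hm'⟩, ?_⟩
  · intro m hm
    rcases List.mem_append.1 hm with h | h
    exacts [h2 m h, h2' m h]
  · simp [Algebra.TensorProduct.tmul_mul_tmul, monomial_mul]

theorem PP_mul_PP {k : Type} [Field k] {n s t : ℕ} {a b : KK k n}
    (ha : a ∈ PP k n s) (hb : b ∈ PP k n t) : a * b ∈ PP k n (s + t) := by
  have h := Submodule.mul_mem_mul ha hb
  rw [PP, PP, Submodule.span_mul_span] at h
  refine Submodule.span_mono ?_ h
  rintro _ ⟨_, ⟨u, L, h1, h2, rfl⟩, _, ⟨u', L', h1', h2', rfl⟩, rfl⟩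
  refine ⟨u + u', L ++ L', by simp [h1, h1'], ?_, ?_⟩
  · intro m hm
    rcases List.mem_append.1 hm with h | h
    exacts [h2 m h, h2' m h]
  · simp [Algebra.TensorProduct.tmul_mul_tmul, monomial_mul]

/-- The block `⋀_{j<i} x_j x_i`. -/
def blk (k : Type) [Field k] {n : ℕ} (i : Fin n) : ExteriorAlgebra k (S2 k n) :=
  (((List.finRange n).filter (fun j => j < i)).map
      (fun j => ExteriorAlgebra.ι k (q j i : S2 k n))).prod

theorem filter_lt_eq {n : ℕ} (i : Fin n) :
    (List.finRange n).filter (fun j => j < i) =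
      (List.finRange (i:ℕ)).map (Fin.castLE i.isLt.le) := by
  apply List.map_injective_iff.2 Fin.val_injective
  rw [List.map_map]
  have h1 : ((fun x : Fin n => (x:ℕ)) ∘ Fin.castLE i.isLt.le) = (fun x : Fin (i:ℕ) => (x:ℕ)) := by
    ext x; simp
  have h2 : (List.finRange n).filter (fun j => decide (j < i)) =
      (List.finRange n).filter ((fun a : ℕ => decide (a < (i:ℕ))) ∘ (fun x : Fin n => (x:ℕ))) := by
    apply List.filter_congr; intro x _; rfl
  rw [h1, h2, ← List.filter_map, List.map_coe_finRange_eq_range, List.map_coe_finRange_eq_range]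
  refine List.Perm.eq_of_pairwise (le := (· < ·)) ?_ ?_ ?_ ?_
  · intro a b _ _ h h'; omega
  · exact List.Pairwise.filter _ List.pairwise_lt_range
  · exact List.pairwise_lt_range
  · rw [List.perm_ext_iff_of_nodup (List.nodup_range.filter _) List.nodup_range]
    intro a
    have := i.isLt
    simp; omega

theorem blk_eq {k : Type} [Field k] {n : ℕ} (i : Fin n) :
    blk k i = ExteriorAlgebra.ιMulti k (i:ℕ)
      (fun l : Fin (i:ℕ) => (q (Fin.castLE i.isLt.le l) i : S2 k n)) := by
  rw [blk, filter_lt_eq, ExteriorAlgebra.ιMulti_apply, List.ofFn_eq_map, List.map_map]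
  rfl

theorem tmul_mem_PP {k : Type} [Field k] {n t : ℕ} (j : Fin n) (m : Fin t → S2 k n)
    (h : ∀ l, ∃ i j : Fin n, m l = q i j) :
    (X j : S k n) ⊗ₜ[k] (ExteriorAlgebra.ιMulti k t m : ExteriorAlgebra k (S2 k n)) ∈ PP k n t := by
  refine Submodule.subset_span ⟨Finsupp.single j 1, List.ofFn m, by simp, ?_, ?_⟩
  · simpa [List.mem_ofFn] using h
  · rw [ExteriorAlgebra.ιMulti_apply, List.map_ofFn]; rfl

theorem tmul_mem_BB {k : Type} [Field k] {n t : ℕ} (j : Fin n) (m : Fin t → S2 k n)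
    (h : ∀ l, ∃ i j : Fin n, m l = q i j) (h' : ∃ l, ∃ i : Fin n, m l = q i i) :
    (X j : S k n) ⊗ₜ[k] (ExteriorAlgebra.ιMulti k t m : ExteriorAlgebra k (S2 k n)) ∈ BB k n t := by
  obtain ⟨l, i, hl⟩ := h'
  refine Submodule.subset_span ⟨Finsupp.single j 1, List.ofFn m, by simp, ?_,
    ⟨m l, by simp [List.mem_ofFn], i, hl⟩, ?_⟩
  · simpa [List.mem_ofFn] using h
  · rw [ExteriorAlgebra.ιMulti_apply, List.map_ofFn]; rfl

theorem blk_mem {k : Type} [Field k] {n : ℕ} (i : Fin n) :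
    (X i : S k n) ⊗ₜ[k] blk k i ∈ PP k n i := by
  rw [blk_eq]
  exact tmul_mem_PP _ _ (fun l => ⟨_, _, rfl⟩)

theorem Zel_eq {k : Type} [Field k] {n : ℕ} (i : Fin n) :
    ∃ R ∈ BB k n i, (Zel i : KK k n) = ((-1:ℤ)^(i:ℕ)) • ((X i : S k n) ⊗ₜ[k] blk k i) + R := by
  rw [Zel, Fin.sum_univ_castSucc]
  refine ⟨_, ?_, add_comm _ _ |>.trans (congrArg₂ (· + ·) ?_ rfl)⟩
  rotate_left
  · rw [blk_eq]
    simp only [Fin.succAbove_last, Fin.val_last]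
    rfl
  · refine Submodule.sum_mem _ fun j _ => zsmul_mem (tmul_mem_BB _ _ (fun l => ⟨_, _, rfl⟩) ?_) _
    obtain ⟨l, hl⟩ := Fin.exists_succAbove_eq (Fin.castSucc_lt_last j).ne'
    refine ⟨l, i, ?_⟩
    rw [hl]
    rfl

theorem list_prod {k : Type} [Field k] {n : ℕ} (L : List (Fin n)) :
    (L.map (fun i => (X i : S k n))).prod ⊗ₜ[k] (L.map (blk k)).prod
      ∈ PP k n (L.map (fun i : Fin n => (i:ℕ))).sum ∧
    ∃ ε : ℤ, (ε = 1 ∨ ε = -1) ∧ ∃ E ∈ BB k n (L.map (fun i : Fin n => (i:ℕ))).sum,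
      (L.map (fun i => (Zel i : KK k n))).prod =
        ε • ((L.map (fun i => (X i : S k n))).prod ⊗ₜ[k] (L.map (blk k)).prod) + E := by
  induction L with
  | nil =>
    refine ⟨Submodule.subset_span ⟨0, [], by simp, by simp, by simp⟩, 1, Or.inl rfl, 0,
      Submodule.zero_mem _, ?_⟩
    simp [Algebra.TensorProduct.one_def]
  | cons i L ih =>
    obtain ⟨hP, ε, hε, E, hE, hprod⟩ := ih
    obtain ⟨R, hR, hZ⟩ := Zel_eq (k := k) i
    have hi := blk_mem (k := k) i
    simp only [List.map_cons, List.prod_cons, List.sum_cons]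
    rw [← Algebra.TensorProduct.tmul_mul_tmul]
    refine ⟨PP_mul_PP hi hP, (-1)^(i:ℕ) * ε, ?_, ?_⟩
    · rcases neg_one_pow_eq_or ℤ (i:ℕ) with h | h <;> rcases hε with h' | h' <;> simp [h, h']
    rw [hZ, hprod]
    set a := (X i : S k n) ⊗ₜ[k] blk k i
    set b := (L.map (fun i => (X i : S k n))).prod ⊗ₜ[k] (L.map (blk k)).prod
    refine ⟨(((-1:ℤ)^(i:ℕ)) • a) * E + R * (ε • b + E), ?_, ?_⟩
    · exact add_mem (PP_mul_BB (zsmul_mem hi _) hE)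
        (BB_mul_PP hR (add_mem (zsmul_mem hP _) (BB_le _ _ _ hE)))
    · rw [add_mul, mul_add, smul_mul_smul_comm]
      abel

/-- There is a sign `ε ∈ {+1,-1}` with
`Z_0 · Z_1 ⋯ Z_{n-1} = ε T + E`, where `T = x_1 ⋯ x_n ⊗ ⋀_{i=1}^n (⋀_{j=1}^{i-1} x_j x_i)`
and `E` is a `k`-linear combination of elements `f ⊗ m_1 ∧ ⋯ ∧ m_N` in which `f` and the
quadratic monomials `m_1, …, m_N` are monomials and at least one `m_l` equals `x_i²`
for some `i`. -/
theorem full_product_unique_squarefree_term (k : Type) [Field k] [CharZero k] (n : ℕ) :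
    ∃ ε : ℤ, (ε = 1 ∨ ε = -1) ∧
      ∃ E ∈ Submodule.span k {w : KK k n |
          ∃ (u : Fin n →₀ ℕ) (m : Fin (n*(n-1)/2) → S2 k n),
            (∀ l, ∃ i j : Fin n, m l = q i j) ∧
            (∃ l, ∃ i : Fin n, m l = q i i) ∧
            w = (monomial u (1:k) : S k n) ⊗ₜ[k]
              (ExteriorAlgebra.ιMulti k (n*(n-1)/2) m : ExteriorAlgebra k (S2 k n))},
        ((List.finRange n).map (fun i => (Zel i : KK k n))).prod =
          ε • ((∏ i : Fin n, (X i : S k n)) ⊗ₜ[k] wedgeT k n) + E := by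
  obtain ⟨-, ε, hε, E, hE, h⟩ := list_prod (k := k) (List.finRange n)
  refine ⟨ε, hε, E, ?_, ?_⟩
  · have hs : ((List.finRange n).map (fun i : Fin n => (i:ℕ))).sum = n*(n-1)/2 := by
      rw [← List.ofFn_eq_map, List.sum_ofFn, Fin.sum_univ_eq_sum_range (fun i => i),
        Finset.sum_range_id]
    rw [hs] at hE
    refine Submodule.span_mono ?_ hE
    rintro w ⟨u, L, hL, h1, ⟨m, hm, i, hi⟩, rfl⟩
    generalize n*(n-1)/2 = N at hL
    subst hL
    obtain ⟨l, hl⟩ := List.get_of_mem hm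
    refine ⟨u, L.get, fun l => h1 _ (List.get_mem _ _), ⟨l, i, hl.trans hi⟩, ?_⟩
    rw [ExteriorAlgebra.ιMulti_apply]
    congr 2
    conv_lhs => rw [← List.ofFn_get L]
    rw [List.map_ofFn]
    rfl
  · rw [h, ← List.ofFn_eq_map, List.prod_ofFn]
    rfl

end
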